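/- Let E be a finite-dimensional real inner product space, let U ⊆ ℝ × E be an open set, let F be a finite-dimensional real normed space, let g : ℝ × E → F be a smooth map, and let N = {x ∈ U : g x = 0}. Suppose that every point p ∈ U has an open neighborhood V ⊆ U carrying a smooth local vector field Y : V → ℝ × E such that Y q is future-directed timelike (i.e. ‖(Y q).2‖ < (Y q).1) for every q ∈ V, and the derivative of g annihilates Y along N, i.e. (fderiv ℝ g q) (Y q) = 0 for every q ∈ V ∩ N. Then there exists a smooth vector field X : U → ℝ × E such that X q is future-directed timelike for every q ∈ U and (fderiv ℝ g q) (X q) = 0 for every q ∈ N. (This is the Minkowski-ambient form of the paper's Lemma 1: a nonsingular future-directed timelike vector field tangent to the submanifold N = g⁻¹(0) can be extended globally, by gluing local fields with a smooth partition of unity, using that at each point the admissible vectors form a convex set.) -/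

import Mathlib

/-!
At each point the future-directed timelike vectors form a convex cone, and the tangency condition
cuts out of it a convex subset. A smooth partition of unity therefore glues the local fields: near
each point the glued field is a convex combination of admissible fields.
-/

open scoped Topology Manifold ContDiff

section Gluing

variable {E F : Type*} [NormedAddCommGroup E] [NormedSpace ℝ E]
  [NormedAddCommGroup F] [NormedSpace ℝ F]

theorem contMDiff_comp_subtypeVal_iff_contDiffOn {n : ℕ∞ω} {O : TopologicalSpace.Opens E}
    {f : E → F} :
    ContMDiff 𝓘(ℝ, E) 𝓘(ℝ, F) n (fun x : O ↦ f x) ↔ ContDiffOn ℝ n f O := by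
  rw [O.isOpen.contDiffOn_iff]
  exact Subtype.forall.trans <| forall₂_congr fun x hx ↦
    (contMDiffAt_subtype_iff (x := ⟨x, hx⟩)).trans contMDiffAt_iff_contDiffAt

theorem exists_contDiffOn_forall_mem_convex_of_local [FiniteDimensional ℝ E] {n : ℕ∞}
    {U : Set E} (hU : IsOpen U) {t : E → Set F} (ht : ∀ x ∈ U, Convex ℝ (t x))
    (hloc : ∀ x ∈ U, ∃ V ∈ 𝓝 x, ∃ f : E → F, ContDiffOn ℝ n f V ∧ ∀ y ∈ V, f y ∈ t y) :
    ∃ f : E → F, ContDiffOn ℝ n f U ∧ ∀ x ∈ U, f x ∈ t x := by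
  let O : TopologicalSpace.Opens E := ⟨U, hU⟩
  have : LocallyCompactSpace O := hU.locallyCompactSpace
  have hloc_O (x : O) : ∃ V ∈ 𝓝 x, ∃ f : O → F,
      ContMDiffOn 𝓘(ℝ, E) 𝓘(ℝ, F) n f V ∧ ∀ y ∈ V, f y ∈ t y := by
    obtain ⟨V, hV, f, hf, hft⟩ := hloc x x.2
    exact ⟨Subtype.val ⁻¹' V, continuous_subtype_val.continuousAt hV, f ∘ Subtype.val,
      hf.contMDiffOn.comp contMDiff_subtype_val.contMDiffOn subset_rfl, fun y hy ↦ hft y hy⟩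
  obtain ⟨f, hft⟩ := exists_contMDiffMap_forall_mem_convex_of_local 𝓘(ℝ, E)
    (fun x : O ↦ ht x x.2) hloc_O
  let fU : E → F := Function.extend Subtype.val f 0
  have hfU (x : O) : fU x = f x := Subtype.val_injective.extend_apply f 0 x
  refine ⟨fU, contMDiff_comp_subtypeVal_iff_contDiffOn (O := O).1 ?_, fun x hx ↦ ?_⟩
  · simpa only [hfU] using f.contMDiff
  · simpa only [hfU ⟨x, hx⟩] using hft ⟨x, hx⟩

end Gluing

section Timelike

variable (E : Type*) [SeminormedAddCommGroup E]

/-- The cone of future-directed timelike vectors of the Minkowski space `ℝ × E`, whose first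
component is the time coordinate. -/
def futureTimelikeCone : Set (ℝ × E) := {v | ‖v.2‖ < v.1}

theorem convex_futureTimelikeCone [NormedSpace ℝ E] : Convex ℝ (futureTimelikeCone E) := by
  have h_snd : ConvexOn ℝ Set.univ fun v : ℝ × E ↦ ‖v.2‖ :=
    convexOn_univ_norm.comp_linearMap (LinearMap.snd ℝ ℝ E)
  have h_fst : ConcaveOn ℝ Set.univ fun v : ℝ × E ↦ v.1 :=
    (LinearMap.fst ℝ ℝ E).concaveOn convex_univ
  simpa [futureTimelikeCone] using (h_snd.sub h_fst).convex_lt 0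

end Timelike

theorem exists_global_timelike_field_tangent_to_level_set_general
    {E : Type*} [NormedAddCommGroup E] [NormedSpace ℝ E] [FiniteDimensional ℝ E] {n : ℕ∞}
    {U : Set (ℝ × E)} (hU : IsOpen U) (N : Set (ℝ × E)) (T : ℝ × E → Submodule ℝ (ℝ × E))
    (hloc : ∀ p ∈ U, ∃ V ∈ 𝓝 p, ∃ Y : ℝ × E → ℝ × E, ContDiffOn ℝ n Y V ∧
      (∀ q ∈ V, Y q ∈ futureTimelikeCone E) ∧ ∀ q ∈ V ∩ N, Y q ∈ T q) :
    ∃ X : ℝ × E → ℝ × E, ContDiffOn ℝ n X U ∧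
      (∀ q ∈ U, X q ∈ futureTimelikeCone E) ∧ ∀ q ∈ U ∩ N, X q ∈ T q := by
  let admissible (q : ℝ × E) : Set (ℝ × E) :=
    futureTimelikeCone E ∩ ⋂ _ : q ∈ N, (T q : Set (ℝ × E))
  have mem_admissible {q v} : v ∈ admissible q ↔ v ∈ futureTimelikeCone E ∧ (q ∈ N → v ∈ T q) := by
    simp only [admissible, Set.mem_inter_iff, Set.mem_iInter, SetLike.mem_coe]
  have convex_admissible (q) : Convex ℝ (admissible q) :=
    (convex_futureTimelikeCone E).inter <| convex_iInter fun _ ↦ (T q).convex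
  obtain ⟨X, hX, hX_mem⟩ := exists_contDiffOn_forall_mem_convex_of_local (n := n) hU
    (fun q _ ↦ convex_admissible q) fun p hp ↦ by
      obtain ⟨V, hV, Y, hY, hY_cone, hY_tangent⟩ := hloc p hp
      exact ⟨V, hV, Y, hY, fun q hq ↦
        mem_admissible.2 ⟨hY_cone q hq, fun hqN ↦ hY_tangent q ⟨hq, hqN⟩⟩⟩
  exact ⟨X, hX, fun q hq ↦ (mem_admissible.1 (hX_mem q hq)).1,
    fun q hq ↦ (mem_admissible.1 (hX_mem q hq.1)).2 hq.2⟩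

/-- Minkowski-ambient form of the paper's Lemma 1: if every point of the open set `U`
in the Minkowski space `ℝ × E` has a neighborhood carrying a smooth future-directed
timelike vector field tangent to `N = {x ∈ U | g x = 0}` (in the sense that the
derivative of `g` annihilates it along `N`), then there is a global smooth
future-directed timelike vector field on `U` tangent to `N` everywhere on `N`. -/
theorem exists_global_timelike_field_tangent_to_level_set
    (E : Type*) [NormedAddCommGroup E] [InnerProductSpace ℝ E]
    [FiniteDimensional ℝ E]
    (F : Type*) [NormedAddCommGroup F] [NormedSpace ℝ F] [FiniteDimensional ℝ F]
    (U : Set (ℝ × E)) (hU : IsOpen U)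
    (g : ℝ × E → F) (hg : ContDiff ℝ (⊤ : ℕ∞) g)
    (N : Set (ℝ × E)) (hN : N = {x ∈ U | g x = 0})
    (hloc : ∀ p ∈ U, ∃ V : Set (ℝ × E), IsOpen V ∧ p ∈ V ∧ V ⊆ U ∧
      ∃ Y : ℝ × E → ℝ × E, ContDiffOn ℝ (⊤ : ℕ∞) Y V ∧
        (∀ q ∈ V, ‖(Y q).2‖ < (Y q).1) ∧
        (∀ q ∈ V ∩ N, fderiv ℝ g q (Y q) = 0)) :
    ∃ X : ℝ × E → ℝ × E, ContDiffOn ℝ (⊤ : ℕ∞) X U ∧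
      (∀ q ∈ U, ‖(X q).2‖ < (X q).1) ∧
      (∀ q ∈ N, fderiv ℝ g q (X q) = 0) := by
  obtain ⟨X, hX, hX_cone, hX_tangent⟩ :=
    exists_global_timelike_field_tangent_to_level_set_general hU N
      (fun q ↦ (fderiv ℝ g q).ker) fun p hp ↦
        let ⟨V, hV, hpV, _, hY⟩ := hloc p hp
        ⟨V, hV.mem_nhds hpV, hY⟩
  exact ⟨X, hX, hX_cone, fun q hq ↦ hX_tangent q ⟨(hN.subset hq).1, hq⟩⟩
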